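/- arXiv:2404.15518 — 6 statements merged into one kernel-verified Lean document; each statement's English description precedes it below -/
import Mathlib

section
/- Assume X has linearly independent rows (equivalently, XXᵀ is invertible) and that S := D(I − γP) is invertible. Let w₀ := Xᵀ(XXᵀ)⁻¹y. Then: (i) Xw₀ = y and ‖w₀‖₂ ≤ ‖w‖₂ for every w ∈ ℝᵈ with Xw = y (w₀ is the minimum-norm ordinary least squares solution); (ii) Aw₀ = b and ‖w₀‖₂ ≤ ‖w‖₂ for every w ∈ ℝᵈ with Aw = b (w₀ is also the minimum-norm solution of the TD linear system); and (iii) every w ∈ ℝᵈ with Xw = y satisfies Aw = b. -/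
open scoped BigOperators
open Matrix

/-- The Euclidean (ℓ2) norm of a vector in `Fin d → ℝ`. -/
noncomputable def l2norm {d : ℕ} (w : Fin d → ℝ) : ℝ :=
  Real.sqrt (∑ i, w i ^ 2)

/-- A vector in the row space of `X` has the least norm among all vectors with the same image. -/
theorem l2norm_transpose_mulVec_le {n d : ℕ} (X : Matrix (Fin n) (Fin d) ℝ) (z : Fin n → ℝ)
    (w : Fin d → ℝ) (h : X *ᵥ w = X *ᵥ (Xᵀ *ᵥ z)) : l2norm (Xᵀ *ᵥ z) ≤ l2norm w := by
  have hsq (v : Fin d → ℝ) : ∑ i, v i ^ 2 = v ⬝ᵥ v := by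
    simp only [dotProduct, sq]
  have horth : (Xᵀ *ᵥ z) ⬝ᵥ w = (Xᵀ *ᵥ z) ⬝ᵥ (Xᵀ *ᵥ z) := by
    conv_lhs => rw [mulVec_transpose, ← dotProduct_mulVec, h, dotProduct_mulVec, ← mulVec_transpose]
  have hnonneg : 0 ≤ (w - Xᵀ *ᵥ z) ⬝ᵥ (w - Xᵀ *ᵥ z) := by
    rw [← hsq]
    positivity
  rw [sub_dotProduct, dotProduct_sub, dotProduct_sub, dotProduct_comm w (Xᵀ *ᵥ z), horth] at hnonneg
  unfold l2norm
  rw [hsq, hsq]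
  exact Real.sqrt_le_sqrt (by linarith)

/-- If `X Xᵀ` and `S` are invertible, then `Xᵀ S` is injective. -/
theorem transpose_mul_mulVec_injective {n d : ℕ} {X : Matrix (Fin n) (Fin d) ℝ}
    {S : Matrix (Fin n) (Fin n) ℝ} (hX : IsUnit (X * Xᵀ)) (hS : IsUnit S) :
    Function.Injective (Xᵀ * S).mulVec := by
  intro u v huv
  apply mulVec_injective_of_isUnit (hX.mul hS)
  simpa only [mulVec_mulVec, Matrix.mul_assoc] using congrArg X.mulVec huv

/-- With `S := D (I - γ P)` invertible and `X` having linearly independent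
rows (i.e. `X Xᵀ` invertible), the vector `w₀ := Xᵀ (X Xᵀ)⁻¹ y` is (i) the minimum-norm
solution of `X w = y` (OLS), (ii) the minimum-norm solution of the TD system `A w = b`
with `A := Xᵀ S X`, `b := Xᵀ S y`, and (iii) every solution of `X w = y` solves `A w = b`. -/
theorem td_ols_min_norm {n d : ℕ} (X : Matrix (Fin n) (Fin d) ℝ) (y : Fin n → ℝ)
    (D P : Matrix (Fin n) (Fin n) ℝ) (γ : ℝ)
    (hDdiag : ∀ i j, i ≠ j → D i j = 0) (hDpos : ∀ i, 0 < D i i)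
    (hPnonneg : ∀ i j, 0 ≤ P i j) (hProw : ∀ i, ∑ j, P i j = 1)
    (hγ0 : 0 ≤ γ) (hγ1 : γ < 1)
    (hX : IsUnit (X * Xᵀ))
    (hS : IsUnit (D * (1 - γ • P))) :
    (X.mulVec ((Xᵀ * (X * Xᵀ)⁻¹).mulVec y) = y ∧
      ∀ w : Fin d → ℝ, X.mulVec w = y →
        l2norm ((Xᵀ * (X * Xᵀ)⁻¹).mulVec y) ≤ l2norm w) ∧
    ((Xᵀ * (D * (1 - γ • P)) * X).mulVec ((Xᵀ * (X * Xᵀ)⁻¹).mulVec y) =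
        (Xᵀ * (D * (1 - γ • P))).mulVec y ∧
      ∀ w : Fin d → ℝ,
        (Xᵀ * (D * (1 - γ • P)) * X).mulVec w = (Xᵀ * (D * (1 - γ • P))).mulVec y →
          l2norm ((Xᵀ * (X * Xᵀ)⁻¹).mulVec y) ≤ l2norm w) ∧
    (∀ w : Fin d → ℝ, X.mulVec w = y →
      (Xᵀ * (D * (1 - γ • P)) * X).mulVec w = (Xᵀ * (D * (1 - γ • P))).mulVec y) := by
  have hsol : X *ᵥ ((Xᵀ * (X * Xᵀ)⁻¹) *ᵥ y) = y := by
    rw [mulVec_mulVec, ← Matrix.mul_assoc,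
      mul_nonsing_inv _ ((isUnit_iff_isUnit_det _).mp hX), one_mulVec]
  have hmin (w : Fin d → ℝ) (hw : X *ᵥ w = y) :
      l2norm ((Xᵀ * (X * Xᵀ)⁻¹) *ᵥ y) ≤ l2norm w := by
    rw [← mulVec_mulVec] at hsol ⊢
    exact l2norm_transpose_mulVec_le X _ w (hw.trans hsol.symm)
  have hTD (w : Fin d → ℝ) (hw : X *ᵥ w = y) :
      (Xᵀ * (D * (1 - γ • P)) * X) *ᵥ w = (Xᵀ * (D * (1 - γ • P))) *ᵥ y := by
    rw [← mulVec_mulVec, hw]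
  refine ⟨⟨hsol, hmin⟩, ⟨hTD _ hsol, fun w hw => hmin w ?_⟩, hTD⟩
  rw [← mulVec_mulVec] at hw
  exact transpose_mul_mulVec_injective hX hS hw
end

section
/- For all w^A, w^B ∈ ℝᵈ, the expected TD update satisfies ⟨w^A − w^B, ḡ(w^B) − ḡ(w^A)⟩ ≥ (1/L − γL)·Σ_s D(s)·(z_{w^A}(s) − z_{w^B}(s))². -/
open scoped RealInnerProductSpace BigOperators
open Finset

/-- The per-sample TD update
`g(w; s, s') := (f(r(s,s') + γ⟨x(s'), w⟩) − f(⟨x(s), w⟩)) • x(s)`. -/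
noncomputable def tdSample {S : Type*} {d : ℕ} (x : S → EuclideanSpace ℝ (Fin d))
    (r : S → S → ℝ) (γ : ℝ) (f : ℝ → ℝ) (w : EuclideanSpace ℝ (Fin d)) (s s' : S) :
    EuclideanSpace ℝ (Fin d) :=
  (f (r s s' + γ * ⟪x s', w⟫) - f ⟪x s, w⟫) • x s

/-- The expected TD update `ḡ(w) := Σ_{s,s'} D(s) P(s,s') g(w; s, s')`. -/
noncomputable def tdExpected {S : Type*} [Fintype S] {d : ℕ} (D : S → ℝ) (P : S → S → ℝ)
    (x : S → EuclideanSpace ℝ (Fin d)) (r : S → S → ℝ) (γ : ℝ) (f : ℝ → ℝ)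
    (w : EuclideanSpace ℝ (Fin d)) : EuclideanSpace ℝ (Fin d) :=
  ∑ s, ∑ s', (D s * P s s') • tdSample x r γ f w s s'

/-- A strictly increasing `f` with lower Lipschitz constant `c` is strongly monotone. -/
theorem StrictMono.sq_le_sub_mul_sub {f : ℝ → ℝ} (hf : StrictMono f) {c : ℝ}
    (hc : ∀ a b : ℝ, c * |a - b| ≤ |f a - f b|) (a b : ℝ) :
    c * (a - b) ^ 2 ≤ (a - b) * (f a - f b) := by
  have hnonneg : 0 ≤ (a - b) * (f a - f b) := by
    rcases le_total a b with h | h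
    · exact mul_nonneg_of_nonpos_of_nonpos (sub_nonpos.2 h) (sub_nonpos.2 (hf.monotone h))
    · exact mul_nonneg (sub_nonneg.2 h) (sub_nonneg.2 (hf.monotone h))
  calc c * (a - b) ^ 2 = |a - b| * (c * |a - b|) := by rw [← sq_abs]; ring
    _ ≤ |a - b| * |f a - f b| := mul_le_mul_of_nonneg_left (hc a b) (abs_nonneg _)
    _ = (a - b) * (f a - f b) := by rw [← abs_mul, abs_of_nonneg hnonneg]

/-- The one-transition lower bound: `a, b` are the values at the current state, `a', b'` those at
the next state, and `ρ` is the reward. -/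
theorem td_transition_lower_bound {f : ℝ → ℝ} (hf : StrictMono f) {γ L : ℝ} (hγ : 0 ≤ γ)
    (hL : 0 ≤ L)
    (hfLip : ∀ a b : ℝ, (1 / L) * |a - b| ≤ |f a - f b| ∧ |f a - f b| ≤ L * |a - b|)
    (ρ a b a' b' : ℝ) :
    (1 / L - γ * L / 2) * (a - b) ^ 2 - γ * L / 2 * (a' - b') ^ 2 ≤
      (a - b) * ((f (ρ + γ * b') - f b) - (f (ρ + γ * a') - f a)) := by
  have hmono := hf.sq_le_sub_mul_sub (fun a b => (hfLip a b).1) a b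
  have hlip : |f (ρ + γ * a') - f (ρ + γ * b')| ≤ γ * L * |a' - b'| := by
    refine (hfLip _ _).2.trans_eq ?_
    rw [show ρ + γ * a' - (ρ + γ * b') = γ * (a' - b') by ring, abs_mul, abs_of_nonneg hγ]
    ring
  have hcross : (a - b) * (f (ρ + γ * a') - f (ρ + γ * b')) ≤
      γ * L / 2 * ((a - b) ^ 2 + (a' - b') ^ 2) :=
    calc (a - b) * (f (ρ + γ * a') - f (ρ + γ * b'))
        ≤ |a - b| * |f (ρ + γ * a') - f (ρ + γ * b')| := by
          rw [← abs_mul]; exact le_abs_self _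
      _ ≤ |a - b| * (γ * L * |a' - b'|) := mul_le_mul_of_nonneg_left hlip (abs_nonneg _)
      _ = γ * L / 2 * (2 * |a - b| * |a' - b'|) := by ring
      _ ≤ γ * L / 2 * (|a - b| ^ 2 + |a' - b'| ^ 2) :=
          mul_le_mul_of_nonneg_left (two_mul_le_add_sq _ _) (by positivity)
      _ = γ * L / 2 * ((a - b) ^ 2 + (a' - b') ^ 2) := by rw [sq_abs, sq_abs]
  linarith

/-- The inner product against a difference of expected TD updates, as a sum over transitions. -/
theorem inner_tdExpected_sub {S : Type*} [Fintype S] {d : ℕ} (D : S → ℝ) (P : S → S → ℝ)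
    (x : S → EuclideanSpace ℝ (Fin d)) (r : S → S → ℝ) (γ : ℝ) (f : ℝ → ℝ)
    (wA wB : EuclideanSpace ℝ (Fin d)) :
    ⟪wA - wB, tdExpected D P x r γ f wB - tdExpected D P x r γ f wA⟫ =
      ∑ s, ∑ s', D s * P s s' * ((⟪x s, wA⟫ - ⟪x s, wB⟫) *
        ((f (r s s' + γ * ⟪x s', wB⟫) - f ⟪x s, wB⟫) -
          (f (r s s' + γ * ⟪x s', wA⟫) - f ⟪x s, wA⟫))) := by
  simp only [tdExpected, tdSample, ← sum_sub_distrib, inner_sum]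
  refine sum_congr rfl fun s _ => sum_congr rfl fun s' _ => ?_
  rw [← smul_sub, ← sub_smul, inner_smul_right, inner_smul_right, real_inner_comm (x s) (wA - wB),
    inner_sub_right]
  ring

/-- Under a stationary distribution, the current and next states have the same expectations. -/
theorem sum_stationary_next {S : Type*} [Fintype S] {D : S → ℝ} {P : S → S → ℝ}
    (hstat : ∀ s', ∑ s, D s * P s s' = D s') (h : S → ℝ) :
    ∑ s, ∑ s', D s * P s s' * h s' = ∑ s, D s * h s := by
  rw [sum_comm]
  exact sum_congr rfl fun s' _ => by rw [← sum_mul, hstat]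

/-- the expected TD update satisfies
`⟨w^A − w^B, ḡ(w^B) − ḡ(w^A)⟩ ≥ (1/L − γL) Σ_s D(s)(z_{w^A}(s) − z_{w^B}(s))²`. -/
theorem td_expected_cross_product {S : Type*} [Fintype S] [Nonempty S] {d : ℕ}
    (D : S → ℝ) (P : S → S → ℝ) (x : S → EuclideanSpace ℝ (Fin d))
    (r : S → S → ℝ) (γ L : ℝ) (f : ℝ → ℝ)
    (hD : ∀ s, 0 ≤ D s) (hD1 : ∑ s, D s = 1)
    (hP : ∀ s s', 0 ≤ P s s') (hP1 : ∀ s, ∑ s', P s s' = 1)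
    (hstat : ∀ s', ∑ s, D s * P s s' = D s')
    (hx : ∀ s, ‖x s‖ ≤ 1)
    (hγ0 : 0 ≤ γ) (hγ1 : γ < 1) (hL : 1 ≤ L)
    (hf : StrictMono f)
    (hfLip : ∀ a b : ℝ, (1 / L) * |a - b| ≤ |f a - f b| ∧ |f a - f b| ≤ L * |a - b|)
    (wA wB : EuclideanSpace ℝ (Fin d)) :
    ⟪wA - wB, tdExpected D P x r γ f wB - tdExpected D P x r γ f wA⟫ ≥
      (1 / L - γ * L) * ∑ s, D s * (⟪x s, wA⟫ - ⟪x s, wB⟫) ^ 2 := by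
  have hcur : ∑ s, ∑ s', D s * P s s' * (⟪x s, wA⟫ - ⟪x s, wB⟫) ^ 2 =
      ∑ s, D s * (⟪x s, wA⟫ - ⟪x s, wB⟫) ^ 2 :=
    sum_congr rfl fun s _ => by rw [← sum_mul, ← mul_sum, hP1, mul_one]
  have hnext := sum_stationary_next hstat fun s => (⟪x s, wA⟫ - ⟪x s, wB⟫) ^ 2
  rw [inner_tdExpected_sub, ge_iff_le]
  calc (1 / L - γ * L) * ∑ s, D s * (⟪x s, wA⟫ - ⟪x s, wB⟫) ^ 2
      = (1 / L - γ * L / 2) * ∑ s, ∑ s', D s * P s s' * (⟪x s, wA⟫ - ⟪x s, wB⟫) ^ 2 -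
          γ * L / 2 * ∑ s, ∑ s', D s * P s s' * (⟪x s', wA⟫ - ⟪x s', wB⟫) ^ 2 := by
        rw [hcur, hnext]; ring
    _ = ∑ s, ∑ s', D s * P s s' * ((1 / L - γ * L / 2) * (⟪x s, wA⟫ - ⟪x s, wB⟫) ^ 2 -
          γ * L / 2 * (⟪x s', wA⟫ - ⟪x s', wB⟫) ^ 2) := by
        simp only [mul_sum, ← sum_sub_distrib]
        exact sum_congr rfl fun s _ => sum_congr rfl fun s' _ => by ring
    _ ≤ _ := sum_le_sum fun s _ => sum_le_sum fun s' _ =>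
        mul_le_mul_of_nonneg_left
          (td_transition_lower_bound hf hγ0 (zero_le_one.trans hL) hfLip _ _ _ _ _)
          (mul_nonneg (hD s) (hP s s'))
end

section
/- For all w^A, w^B ∈ ℝᵈ, the expected TD update satisfies ‖ḡ(w^A) − ḡ(w^B)‖₂ ≤ 2L·√(Σ_s D(s)·(z_{w^A}(s) − z_{w^B}(s))²). -/
open scoped RealInnerProductSpace BigOperators
open Finset

/-- Jensen's inequality for the square: a weighted mean of absolute values is at most the
weighted root mean square. -/
lemma sum_mul_abs_le_sqrt_sum_mul_sq {S : Type*} [Fintype S] (D u : S → ℝ)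
    (hD : ∀ s, 0 ≤ D s) (hD1 : ∑ s, D s = 1) :
    ∑ s, D s * |u s| ≤ Real.sqrt (∑ s, D s * u s ^ 2) := by
  apply Real.le_sqrt_of_sq_le
  simpa only [smul_eq_mul, sq_abs] using
    (convexOn_pow 2).map_sum_le (t := univ) (w := D) (p := fun s => |u s|)
      (fun s _ => hD s) hD1 (fun s _ => abs_nonneg (u s))

/-- The per-sample TD update changes by at most `L` times the changes in the predictions at the
two states. -/
lemma norm_tdSample_sub_le {S : Type*} {d : ℕ} (x : S → EuclideanSpace ℝ (Fin d))
    (r : S → S → ℝ) {γ L : ℝ} {f : ℝ → ℝ} (hx : ∀ s, ‖x s‖ ≤ 1)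
    (hγ0 : 0 ≤ γ) (hγ1 : γ ≤ 1) (hL : 0 ≤ L) (hf : ∀ a b : ℝ, |f a - f b| ≤ L * |a - b|)
    (wA wB : EuclideanSpace ℝ (Fin d)) (s s' : S) :
    ‖tdSample x r γ f wA s s' - tdSample x r γ f wB s s'‖ ≤
      L * |⟪x s', wA⟫ - ⟪x s', wB⟫| + L * |⟪x s, wA⟫ - ⟪x s, wB⟫| := by
  have next : |f (r s s' + γ * ⟪x s', wA⟫) - f (r s s' + γ * ⟪x s', wB⟫)| ≤
      L * |⟪x s', wA⟫ - ⟪x s', wB⟫| := by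
    refine (hf _ _).trans (mul_le_mul_of_nonneg_left ?_ hL)
    rw [add_sub_add_left_eq_sub, ← mul_sub, abs_mul, abs_of_nonneg hγ0]
    exact mul_le_of_le_one_left (abs_nonneg _) hγ1
  rw [tdSample, tdSample, ← sub_smul, norm_smul, Real.norm_eq_abs, sub_sub_sub_comm]
  exact (mul_le_of_le_one_right (abs_nonneg _) (hx s)).trans
    ((abs_sub _ _).trans (add_le_add next (hf _ _)))

/-- the expected TD update satisfies
`‖ḡ(w^A) − ḡ(w^B)‖₂ ≤ 2L √(Σ_s D(s)(z_{w^A}(s) − z_{w^B}(s))²)`. -/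
theorem td_expected_update_norm {S : Type*} [Fintype S] [Nonempty S] {d : ℕ}
    (D : S → ℝ) (P : S → S → ℝ) (x : S → EuclideanSpace ℝ (Fin d))
    (r : S → S → ℝ) (γ L : ℝ) (f : ℝ → ℝ)
    (hD : ∀ s, 0 ≤ D s) (hD1 : ∑ s, D s = 1)
    (hP : ∀ s s', 0 ≤ P s s') (hP1 : ∀ s, ∑ s', P s s' = 1)
    (hstat : ∀ s', ∑ s, D s * P s s' = D s')
    (hx : ∀ s, ‖x s‖ ≤ 1)
    (hγ0 : 0 ≤ γ) (hγ1 : γ < 1) (hL : 1 ≤ L)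
    (hf : StrictMono f)
    (hfLip : ∀ a b : ℝ, (1 / L) * |a - b| ≤ |f a - f b| ∧ |f a - f b| ≤ L * |a - b|)
    (wA wB : EuclideanSpace ℝ (Fin d)) :
    ‖tdExpected D P x r γ f wA - tdExpected D P x r γ f wB‖ ≤
      2 * L * Real.sqrt (∑ s, D s * (⟪x s, wA⟫ - ⟪x s, wB⟫) ^ 2) := by
  set u : S → ℝ := fun s => ⟪x s, wA⟫ - ⟪x s, wB⟫
  have hL0 : 0 ≤ L := zero_le_one.trans hL
  have next : ∑ s, ∑ s', D s * P s s' * (L * |u s'|) = L * ∑ s, D s * |u s| := by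
    rw [sum_comm, mul_sum]
    refine sum_congr rfl fun s' _ => ?_
    rw [← sum_mul, hstat]
    ring
  have current : ∑ s, ∑ s', D s * P s s' * (L * |u s|) = L * ∑ s, D s * |u s| := by
    rw [mul_sum]
    refine sum_congr rfl fun s _ => ?_
    rw [← sum_mul, ← mul_sum, hP1]
    ring
  calc ‖tdExpected D P x r γ f wA - tdExpected D P x r γ f wB‖
      = ‖∑ s, ∑ s', (D s * P s s') • (tdSample x r γ f wA s s' - tdSample x r γ f wB s s')‖ := by
        simp only [tdExpected, smul_sub, sum_sub_distrib]
    _ ≤ ∑ s, ∑ s', D s * P s s' * (L * |u s'| + L * |u s|) := by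
        refine norm_sum_le_of_le _ fun s _ => norm_sum_le_of_le _ fun s' _ => ?_
        have hDP : 0 ≤ D s * P s s' := mul_nonneg (hD s) (hP s s')
        rw [norm_smul, Real.norm_of_nonneg hDP]
        exact mul_le_mul_of_nonneg_left
          (norm_tdSample_sub_le x r hx hγ0 hγ1.le hL0 (fun a b => (hfLip a b).2) wA wB s s') hDP
    _ = 2 * L * ∑ s, D s * |u s| := by
        simp only [mul_add, sum_add_distrib, next, current]
        ring
    _ ≤ 2 * L * Real.sqrt (∑ s, D s * u s ^ 2) :=
        mul_le_mul_of_nonneg_left (sum_mul_abs_le_sqrt_sum_mul_sq D u hD hD1) (by positivity)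
end

section
/- Assume γL² < 1 and that there exists ω > 0 with Σ_s D(s)·⟨x(s), v⟩² ≥ ω·‖v‖₂² for every v ∈ ℝᵈ, and set the step size α := (1 − γL²)/(4L³). Then there exists a unique point w* ∈ W such that w* is the metric projection of w* + α·ḡ(w*) onto W (i.e., the projected expected TD update admits a unique fixed point in W). -/
open scoped RealInnerProductSpace BigOperators
open Finset

section VariationalInequality

variable {E : Type*} [NormedAddCommGroup E] [InnerProductSpace ℝ E]

/-- A point of a convex set is a metric projection iff it satisfies the obtuse angle criterion. -/
lemma forall_norm_sub_le_iff_inner_le_zero {W : Set E} (hW : Convex ℝ W) {v p : E} (hp : p ∈ W) :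
    (∀ u ∈ W, ‖v - p‖ ≤ ‖v - u‖) ↔ ∀ u ∈ W, ⟪v - p, u - p⟫ ≤ 0 := by
  rw [← norm_eq_iInf_iff_real_inner_le_zero hW hp]
  have : Nonempty W := ⟨⟨p, hp⟩⟩
  have hbdd : BddBelow (Set.range fun w : W => ‖v - w‖) :=
    ⟨0, by rintro _ ⟨w, rfl⟩; exact norm_nonneg _⟩
  constructor
  · intro h
    exact le_antisymm (le_ciInf fun w => h w w.2) (ciInf_le hbdd ⟨p, hp⟩)
  · intro h u hu
    rw [h]
    exact ciInf_le hbdd ⟨u, hu⟩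

/-- Points satisfying the obtuse angle criterion depend nonexpansively on the projected points. -/
lemma norm_sub_le_of_inner_le_zero {W : Set E} {u v p q : E} (hp : p ∈ W) (hq : q ∈ W)
    (hup : ∀ w ∈ W, ⟪u - p, w - p⟫ ≤ 0) (hvq : ∀ w ∈ W, ⟪v - q, w - q⟫ ≤ 0) :
    ‖p - q‖ ≤ ‖u - v‖ := by
  have h1 := hup q hq
  have h2 := hvq p hp
  have h3 : ⟪u - p, q - p⟫ + ⟪v - q, p - q⟫ = ⟪p - q, p - q⟫ - ⟪u - v, p - q⟫ := by
    rw [← neg_sub p q, inner_neg_right, neg_add_eq_sub, ← inner_sub_left, ← inner_sub_left]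
    congr 1
    abel
  have h4 := real_inner_le_norm (u - v) (p - q)
  rw [real_inner_self_eq_norm_sq] at h3
  by_contra! h
  nlinarith [norm_nonneg (u - v), norm_nonneg (p - q)]

/-- A Lipschitz strongly monotone variational inequality over a nonempty closed convex set has a
unique solution. -/
lemma existsUnique_inner_le_zero [CompleteSpace E] {W : Set E} (hne : W.Nonempty)
    (hcl : IsClosed W) (hcvx : Convex ℝ W) {F : E → E} {m K : ℝ} (hm : 0 < m) (hK : 0 < K)
    (hmono : ∀ u v, ⟪F u - F v, u - v⟫ ≤ -m * ‖u - v‖ ^ 2)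
    (hlip : ∀ u v, ‖F u - F v‖ ≤ K * ‖u - v‖) :
    ∃! w, w ∈ W ∧ ∀ u ∈ W, ⟪F w, u - w⟫ ≤ 0 := by
  have hproj : ∀ v, ∃ p ∈ W, ∀ u ∈ W, ⟪v - p, u - p⟫ ≤ 0 := by
    intro v
    obtain ⟨p, hp, h⟩ := exists_norm_eq_iInf_of_complete_convex hne hcl.isComplete hcvx v
    exact ⟨p, hp, (norm_eq_iInf_iff_real_inner_le_zero hcvx hp).1 h⟩
  choose proj hprojW hprojI using hproj
  set η := m / K ^ 2 with hη
  have hη0 : 0 < η := by positivity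
  set T : E → E := fun w => proj (w + η • F w)
  have hcontr : ∀ u v, ‖T u - T v‖ ^ 2 ≤ (1 - m ^ 2 / K ^ 2) * ‖u - v‖ ^ 2 := by
    intro u v
    have h1 : ‖T u - T v‖ ≤ ‖(u - v) + η • (F u - F v)‖ := by
      refine (norm_sub_le_of_inner_le_zero (hprojW _) (hprojW _) (hprojI _) (hprojI _)).trans_eq ?_
      rw [smul_sub]
      congr 1
      abel
    calc ‖T u - T v‖ ^ 2 ≤ ‖(u - v) + η • (F u - F v)‖ ^ 2 := by gcongr
      _ = ‖u - v‖ ^ 2 + 2 * (η * ⟪F u - F v, u - v⟫) + η ^ 2 * ‖F u - F v‖ ^ 2 := by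
        rw [norm_add_sq_real, inner_smul_right, real_inner_comm, norm_smul, mul_pow,
          Real.norm_eq_abs, sq_abs]
      _ ≤ ‖u - v‖ ^ 2 + 2 * (η * (-m * ‖u - v‖ ^ 2)) + η ^ 2 * (K * ‖u - v‖) ^ 2 := by
        gcongr
        · exact hmono u v
        · exact hlip u v
      _ = (1 - m ^ 2 / K ^ 2) * ‖u - v‖ ^ 2 := by
        rw [hη]
        field_simp
        ring
  have hq : Real.sqrt (1 - m ^ 2 / K ^ 2) < 1 := by
    rw [Real.sqrt_lt' one_pos]
    have : 0 < m ^ 2 / K ^ 2 := by positivity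
    linarith
  have hCW : ContractingWith (Real.sqrt (1 - m ^ 2 / K ^ 2)).toNNReal T := by
    refine ⟨by rwa [Real.toNNReal_lt_one], LipschitzWith.of_dist_le_mul fun u v => ?_⟩
    rw [Real.coe_toNNReal _ (Real.sqrt_nonneg _), dist_eq_norm, dist_eq_norm,
      ← Real.sqrt_sq (norm_nonneg (u - v)), ← Real.sqrt_mul' _ (sq_nonneg _)]
    exact Real.le_sqrt_of_sq_le (hcontr u v)
  have : Nonempty E := ⟨hne.some⟩
  refine ⟨hCW.fixedPoint T, ⟨?_, fun u hu => ?_⟩, ?_⟩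
  · rw [← hCW.fixedPoint_isFixedPt]
    exact hprojW _
  · have h := hprojI (hCW.fixedPoint T + η • F (hCW.fixedPoint T)) u hu
    have hfix : proj (hCW.fixedPoint T + η • F (hCW.fixedPoint T)) = hCW.fixedPoint T :=
      hCW.fixedPoint_isFixedPt
    rw [hfix, add_sub_cancel_left, real_inner_smul_left] at h
    exact nonpos_of_mul_nonpos_right h hη0
  · rintro w ⟨hw, hwI⟩
    refine hCW.fixedPoint_unique ?_
    have h : ‖T w - w‖ ≤ ‖(w + η • F w) - (w + η • F w)‖ := by
      refine norm_sub_le_of_inner_le_zero (hprojW _) hw (hprojI _) fun u hu => ?_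
      rw [add_sub_cancel_left, real_inner_smul_left]
      exact mul_nonpos_of_nonneg_of_nonpos hη0.le (hwI u hu)
    rw [sub_self, norm_zero, norm_le_zero_iff, sub_eq_zero] at h
    exact h

end VariationalInequality

section ExpectedUpdate

variable {S : Type*} [Fintype S] {d : ℕ} {D : S → ℝ} {P : S → S → ℝ}
  {x : S → EuclideanSpace ℝ (Fin d)} {r : S → S → ℝ} {γ L : ℝ} {f : ℝ → ℝ}

lemma tdExpected_sub (w v : EuclideanSpace ℝ (Fin d)) :
    tdExpected D P x r γ f w - tdExpected D P x r γ f v =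
      ∑ s, ∑ s', (D s * P s s') • (((f (r s s' + γ * ⟪x s', w⟫) - f (r s s' + γ * ⟪x s', v⟫)) -
        (f ⟪x s, w⟫ - f ⟪x s, v⟫)) • x s) := by
  simp only [tdExpected, tdSample, ← sum_sub_distrib, ← smul_sub, ← sub_smul]
  refine sum_congr rfl fun s _ => sum_congr rfl fun s' _ => ?_
  congr 2
  ring

lemma abs_shifted_sub_le (hγ0 : 0 ≤ γ) (hup : ∀ a b : ℝ, |f a - f b| ≤ L * |a - b|)
    (c : ℝ) (y w v : EuclideanSpace ℝ (Fin d)) :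
    |f (c + γ * ⟪y, w⟫) - f (c + γ * ⟪y, v⟫)| ≤ L * (γ * |⟪y, w - v⟫|) := by
  refine (hup _ _).trans_eq ?_
  rw [add_sub_add_left_eq_sub, ← mul_sub, ← inner_sub_right, abs_mul, abs_of_nonneg hγ0]

/-- The expected TD update is Lipschitz. -/
lemma norm_tdExpected_sub_le (hD : ∀ s, 0 ≤ D s) (hD1 : ∑ s, D s = 1)
    (hP : ∀ s s', 0 ≤ P s s') (hP1 : ∀ s, ∑ s', P s s' = 1) (hx : ∀ s, ‖x s‖ ≤ 1)
    (hγ0 : 0 ≤ γ) (hL : 0 ≤ L) (hup : ∀ a b : ℝ, |f a - f b| ≤ L * |a - b|)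
    (w v : EuclideanSpace ℝ (Fin d)) :
    ‖tdExpected D P x r γ f w - tdExpected D P x r γ f v‖ ≤ L * (γ + 1) * ‖w - v‖ := by
  have hin : ∀ s, |⟪x s, w - v⟫| ≤ ‖w - v‖ := fun s =>
    (abs_real_inner_le_norm _ _).trans (mul_le_of_le_one_left (norm_nonneg _) (hx s))
  rw [tdExpected_sub]
  calc _ ≤ ∑ s, ∑ s', D s * P s s' * (L * (γ + 1) * ‖w - v‖) := by
        refine norm_sum_le_of_le _ fun s _ => norm_sum_le_of_le _ fun s' _ => ?_
        rw [norm_smul, Real.norm_of_nonneg (mul_nonneg (hD s) (hP s s')), norm_smul,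
          Real.norm_eq_abs]
        refine mul_le_mul_of_nonneg_left ?_ (mul_nonneg (hD s) (hP s s'))
        refine (mul_le_of_le_one_right (abs_nonneg _) (hx s)).trans ?_
        refine (abs_sub _ _).trans ?_
        have h1 := abs_shifted_sub_le hγ0 hup (r s s') (x s') w v
        have h2 := hup ⟪x s, w⟫ ⟪x s, v⟫
        rw [← inner_sub_right] at h2
        have h3 : L * (γ * |⟪x s', w - v⟫|) ≤ L * (γ * ‖w - v‖) := by gcongr; exact hin s'
        have h4 : L * |⟪x s, w - v⟫| ≤ L * ‖w - v‖ := by gcongr; exact hin s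
        linarith
    _ = L * (γ + 1) * ‖w - v‖ := by
        simp only [← sum_mul, ← mul_sum, hP1, mul_one, hD1, one_mul]

/-- The negative of the expected TD update is monotone in the feature covariance seminorm. -/
lemma inner_tdExpected_sub_le (hD : ∀ s, 0 ≤ D s)
    (hP : ∀ s s', 0 ≤ P s s') (hP1 : ∀ s, ∑ s', P s s' = 1)
    (hstat : ∀ s', ∑ s, D s * P s s' = D s') (hγ0 : 0 ≤ γ) (hL : 0 ≤ L) (hf : StrictMono f)
    (hlow : ∀ a b : ℝ, (1 / L) * |a - b| ≤ |f a - f b|)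
    (hup : ∀ a b : ℝ, |f a - f b| ≤ L * |a - b|) (w v : EuclideanSpace ℝ (Fin d)) :
    ⟪tdExpected D P x r γ f w - tdExpected D P x r γ f v, w - v⟫ ≤
      -(1 / L - γ * L) * ∑ s, D s * ⟪x s, w - v⟫ ^ 2 := by
  have hmono : ∀ a b : ℝ, (1 / L) * (a - b) ^ 2 ≤ (f a - f b) * (a - b) := by
    intro a b
    have hsign : 0 ≤ (f a - f b) * (a - b) := by
      rcases le_total a b with h | h
      · exact mul_nonneg_of_nonpos_of_nonpos (sub_nonpos.2 (hf.monotone h)) (sub_nonpos.2 h)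
      · exact mul_nonneg (sub_nonneg.2 (hf.monotone h)) (sub_nonneg.2 h)
    rw [← abs_of_nonneg hsign, abs_mul, ← sq_abs, sq, ← mul_assoc]
    exact mul_le_mul_of_nonneg_right (hlow a b) (abs_nonneg _)
  rw [tdExpected_sub]
  simp only [sum_inner, real_inner_smul_left]
  calc _ ≤ ∑ s, ∑ s', D s * P s s' * (L * γ / 2 * ⟪x s', w - v⟫ ^ 2 +
          (L * γ / 2 - 1 / L) * ⟪x s, w - v⟫ ^ 2) := by
        refine sum_le_sum fun s _ => sum_le_sum fun s' _ =>
          mul_le_mul_of_nonneg_left ?_ (mul_nonneg (hD s) (hP s s'))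
        have h1 := abs_shifted_sub_le hγ0 hup (r s s') (x s') w v
        have h2 := hmono ⟪x s, w⟫ ⟪x s, v⟫
        rw [← inner_sub_right] at h2
        set A := f (r s s' + γ * ⟪x s', w⟫) - f (r s s' + γ * ⟪x s', v⟫)
        set a := ⟪x s, w - v⟫
        set b := ⟪x s', w - v⟫
        have h3 : A * a ≤ L * (γ * |b|) * |a| :=
          (le_abs_self _).trans ((abs_mul _ _).trans_le
            (mul_le_mul_of_nonneg_right h1 (abs_nonneg _)))
        have h4 : L * γ * (2 * |b| * |a|) ≤ L * γ * (b ^ 2 + a ^ 2) := by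
          rw [← sq_abs a, ← sq_abs b]
          exact mul_le_mul_of_nonneg_left (two_mul_le_add_sq _ _) (mul_nonneg hL hγ0)
        linarith
    _ = -(1 / L - γ * L) * ∑ s, D s * ⟪x s, w - v⟫ ^ 2 := by
        have hnext : ∑ s, ∑ s', D s * P s s' * (L * γ / 2 * ⟪x s', w - v⟫ ^ 2) =
            L * γ / 2 * ∑ s, D s * ⟪x s, w - v⟫ ^ 2 := by
          rw [sum_comm, mul_sum]
          refine sum_congr rfl fun s' _ => ?_
          rw [← sum_mul, hstat]
          ring
        have hcurr : ∑ s, ∑ s', D s * P s s' * ((L * γ / 2 - 1 / L) * ⟪x s, w - v⟫ ^ 2) =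
            (L * γ / 2 - 1 / L) * ∑ s, D s * ⟪x s, w - v⟫ ^ 2 := by
          rw [mul_sum]
          refine sum_congr rfl fun s _ => ?_
          rw [← sum_mul, ← mul_sum, hP1]
          ring
        simp only [mul_add, sum_add_distrib]
        rw [hnext, hcurr]
        ring

end ExpectedUpdate

/-- with `γL² < 1`, feature covariance lower bound `ω > 0` and step size
`α = (1 − γL²)/(4L³)`, the projected expected TD update admits a unique fixed point
in the nonempty compact convex set `W`. -/
theorem td_projected_update_unique_fixed_point {S : Type*} [Fintype S] [Nonempty S] {d : ℕ}
    (D : S → ℝ) (P : S → S → ℝ) (x : S → EuclideanSpace ℝ (Fin d))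
    (r : S → S → ℝ) (γ L : ℝ) (f : ℝ → ℝ)
    (hD : ∀ s, 0 ≤ D s) (hD1 : ∑ s, D s = 1)
    (hP : ∀ s s', 0 ≤ P s s') (hP1 : ∀ s, ∑ s', P s s' = 1)
    (hstat : ∀ s', ∑ s, D s * P s s' = D s')
    (hx : ∀ s, ‖x s‖ ≤ 1)
    (hγ0 : 0 ≤ γ) (hγ1 : γ < 1) (hL : 1 ≤ L)
    (hf : StrictMono f)
    (hfLip : ∀ a b : ℝ, (1 / L) * |a - b| ≤ |f a - f b| ∧ |f a - f b| ≤ L * |a - b|)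
    (W : Set (EuclideanSpace ℝ (Fin d)))
    (hWne : W.Nonempty) (hWcpt : IsCompact W) (hWcvx : Convex ℝ W)
    (hγL : γ * L ^ 2 < 1)
    (ω : ℝ) (hω : 0 < ω)
    (hcov : ∀ v : EuclideanSpace ℝ (Fin d), ω * ‖v‖ ^ 2 ≤ ∑ s, D s * ⟪x s, v⟫ ^ 2) :
    ∃! wstar : EuclideanSpace ℝ (Fin d), wstar ∈ W ∧
      ∀ u ∈ W,
        ‖wstar + ((1 - γ * L ^ 2) / (4 * L ^ 3)) • tdExpected D P x r γ f wstar - wstar‖ ≤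
          ‖wstar + ((1 - γ * L ^ 2) / (4 * L ^ 3)) • tdExpected D P x r γ f wstar - u‖ := by
  have hL0 : 0 < L := one_pos.trans_le hL
  have hα : 0 < (1 - γ * L ^ 2) / (4 * L ^ 3) := div_pos (by linarith) (by positivity)
  have hgap : 0 < 1 / L - γ * L := by
    have h : 1 / L - γ * L = (1 - γ * L ^ 2) / L := by field_simp
    rw [h]
    exact div_pos (by linarith) hL0
  have hVI := existsUnique_inner_le_zero (F := tdExpected D P x r γ f) hWne hWcpt.isClosed hWcvx
    (mul_pos hgap hω) (mul_pos hL0 (by linarith : 0 < γ + 1))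
    (fun w v => by
      refine (inner_tdExpected_sub_le hD hP hP1 hstat hγ0 hL0.le hf (fun a b => (hfLip a b).1)
        (fun a b => (hfLip a b).2) w v).trans ?_
      have h := mul_le_mul_of_nonneg_left (hcov (w - v)) hgap.le
      linarith)
    (norm_tdExpected_sub_le hD hD1 hP hP1 hx hγ0 hL0.le fun a b => (hfLip a b).2)
  refine (existsUnique_congr fun w => and_congr_right fun hw => ?_).2 hVI
  rw [forall_norm_sub_le_iff_inner_le_zero hWcvx hw]
  refine forall₂_congr fun u _ => ?_
  rw [add_sub_cancel_left, real_inner_smul_left]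
  exact ⟨fun h => nonpos_of_mul_nonpos_right h hα, mul_nonpos_of_nonneg_of_nonpos hα.le⟩
end

section
/- For any w, w' ∈ ℝᵈ, writing σ² := Σ_{s,s'} D(s)·P(s,s')·‖g(w'; s, s')‖₂², it holds that Σ_{s,s'} D(s)·P(s,s')·‖g(w; s, s')‖₂² ≤ 2σ² + 8L²·Σ_s D(s)·⟨x(s), w' − w⟩². -/
open scoped RealInnerProductSpace BigOperators
open Finset

/-- Changing the parameter from `w'` to `w` changes the squared norm of the TD update by at most a
factor two and the squared differences of the linear predictions at `s` and `s'`. -/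
lemma tdSample_norm_sq_le {S : Type*} {d : ℕ} (x : S → EuclideanSpace ℝ (Fin d))
    (r : S → S → ℝ) (γ L : ℝ) (f : ℝ → ℝ) (hγ0 : 0 ≤ γ) (hγ1 : γ ≤ 1)
    (hf : ∀ a b : ℝ, |f a - f b| ≤ L * |a - b|)
    (w w' : EuclideanSpace ℝ (Fin d)) (s s' : S) (hx : ‖x s‖ ≤ 1) :
    ‖tdSample x r γ f w s s'‖ ^ 2 ≤ 2 * ‖tdSample x r γ f w' s s'‖ ^ 2 +
      4 * L ^ 2 * (⟪x s, w' - w⟫ ^ 2 + ⟪x s', w' - w⟫ ^ 2) := by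
  have sq_bound (a b : ℝ) : (f a - f b) ^ 2 ≤ L ^ 2 * (a - b) ^ 2 := by
    have h := pow_le_pow_left₀ (abs_nonneg _) (hf a b) 2
    rwa [mul_pow, sq_abs, sq_abs] at h
  have hnext := sq_bound (r s s' + γ * ⟪x s', w⟫) (r s s' + γ * ⟪x s', w'⟫)
  have hcur := sq_bound ⟪x s, w⟫ ⟪x s, w'⟫
  simp only [tdSample, norm_smul, mul_pow, Real.norm_eq_abs, sq_abs, inner_sub_right]
  generalize ⟪x s', w⟫ = v at *
  generalize ⟪x s', w'⟫ = v' at *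
  generalize ⟪x s, w⟫ = u at *
  generalize ⟪x s, w'⟫ = u' at *
  have hγ : γ ^ 2 ≤ 1 := pow_le_one₀ hγ0 hγ1
  have hdisc : L ^ 2 * (r s s' + γ * v - (r s s' + γ * v')) ^ 2 ≤ L ^ 2 * (v' - v) ^ 2 := by
    have h := mul_le_mul_of_nonneg_right hγ (mul_nonneg (sq_nonneg L) (sq_nonneg (v' - v)))
    linarith
  have hn : ‖x s‖ ^ 2 ≤ 1 := pow_le_one₀ (norm_nonneg _) hx
  generalize f (r s s' + γ * v) = a at *
  generalize f (r s s' + γ * v') = a' at *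
  generalize f u = b at *
  generalize f u' = b' at *
  have hsplit : (a - b) ^ 2 ≤
      2 * (a' - b') ^ 2 + 4 * L ^ 2 * ((u' - u) ^ 2 + (v' - v) ^ 2) := by
    linarith [sq_nonneg ((a - b) - 2 * (a' - b')), sq_nonneg ((a - a') + (b - b'))]
  have hrem : 0 ≤ 4 * L ^ 2 * ((u' - u) ^ 2 + (v' - v) ^ 2) := by positivity
  calc (a - b) ^ 2 * ‖x s‖ ^ 2
      ≤ (2 * (a' - b') ^ 2 + 4 * L ^ 2 * ((u' - u) ^ 2 + (v' - v) ^ 2)) * ‖x s‖ ^ 2 := by gcongr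
    _ ≤ _ := by linarith [mul_le_mul_of_nonneg_left hn hrem]

/-- second-moment bound for the sample TD update:
`Σ_{s,s′} D(s)P(s,s′)‖g(w; s, s′)‖² ≤ 2σ² + 8L² Σ_s D(s)⟨x(s), w′ − w⟩²`
where `σ² = Σ_{s,s′} D(s)P(s,s′)‖g(w′; s, s′)‖²`. -/
theorem td_sample_update_second_moment {S : Type*} [Fintype S] [Nonempty S] {d : ℕ}
    (D : S → ℝ) (P : S → S → ℝ) (x : S → EuclideanSpace ℝ (Fin d))
    (r : S → S → ℝ) (γ L : ℝ) (f : ℝ → ℝ)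
    (hD : ∀ s, 0 ≤ D s) (hD1 : ∑ s, D s = 1)
    (hP : ∀ s s', 0 ≤ P s s') (hP1 : ∀ s, ∑ s', P s s' = 1)
    (hstat : ∀ s', ∑ s, D s * P s s' = D s')
    (hx : ∀ s, ‖x s‖ ≤ 1)
    (hγ0 : 0 ≤ γ) (hγ1 : γ < 1) (hL : 1 ≤ L)
    (hf : StrictMono f)
    (hfLip : ∀ a b : ℝ, (1 / L) * |a - b| ≤ |f a - f b| ∧ |f a - f b| ≤ L * |a - b|)
    (w w' : EuclideanSpace ℝ (Fin d)) :
    ∑ s, ∑ s', D s * P s s' * ‖tdSample x r γ f w s s'‖ ^ 2 ≤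
      2 * (∑ s, ∑ s', D s * P s s' * ‖tdSample x r γ f w' s s'‖ ^ 2) +
        8 * L ^ 2 * ∑ s, D s * ⟪x s, w' - w⟫ ^ 2 := by
  have hcur : ∑ s, ∑ s', D s * P s s' * ⟪x s, w' - w⟫ ^ 2 = ∑ s, D s * ⟪x s, w' - w⟫ ^ 2 :=
    sum_congr rfl fun s _ => by rw [← sum_mul, ← mul_sum, hP1, mul_one]
  have hnext : ∑ s, ∑ s', D s * P s s' * ⟪x s', w' - w⟫ ^ 2 = ∑ s, D s * ⟪x s, w' - w⟫ ^ 2 := by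
    rw [sum_comm]
    exact sum_congr rfl fun s' _ => by rw [← sum_mul, hstat]
  calc ∑ s, ∑ s', D s * P s s' * ‖tdSample x r γ f w s s'‖ ^ 2
      ≤ ∑ s, ∑ s', D s * P s s' * (2 * ‖tdSample x r γ f w' s s'‖ ^ 2 +
          4 * L ^ 2 * (⟪x s, w' - w⟫ ^ 2 + ⟪x s', w' - w⟫ ^ 2)) :=
        sum_le_sum fun s _ => sum_le_sum fun s' _ =>
          mul_le_mul_of_nonneg_left
            (tdSample_norm_sq_le x r γ L f hγ0 hγ1.le (fun a b => (hfLip a b).2) w w' s s' (hx s))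
            (mul_nonneg (hD s) (hP s s'))
    _ = 2 * (∑ s, ∑ s', D s * P s s' * ‖tdSample x r γ f w' s s'‖ ^ 2) +
          4 * L ^ 2 * ((∑ s, ∑ s', D s * P s s' * ⟪x s, w' - w⟫ ^ 2) +
            ∑ s, ∑ s', D s * P s s' * ⟪x s', w' - w⟫ ^ 2) := by
        simp only [mul_sum, ← sum_add_distrib]
        exact sum_congr rfl fun s _ => sum_congr rfl fun s' _ => by ring
    _ = _ := by rw [hcur, hnext]; ring
end

section
/- Assume γL² < 1. Let w* ∈ W satisfy the optimality condition ⟨w* − u, ḡ(w*)⟩ ≥ 0 for all u ∈ W, and set σ² := Σ_{s,s'} D(s)·P(s,s')·‖g(w*; s, s')‖₂². Let w ∈ W, let α satisfy 0 < α ≤ (1 − γL²)/(8L³), and for each pair (s, s') let p(s,s') ∈ W be the metric projection of w + α·g(w; s, s') onto W. Then Σ_{s,s'} D(s)·P(s,s')·‖w* − p(s,s')‖₂² ≤ ‖w* − w‖₂² − α·(1/L − γL)·Σ_s D(s)·⟨x(s), w* − w⟩² + 2α²σ². -/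
open scoped RealInnerProductSpace BigOperators
open Finset

/-- A metric projection onto a convex set does not increase distances to points of the set. -/
lemma norm_sub_le_of_metric_projection {E : Type*} [NormedAddCommGroup E] [InnerProductSpace ℝ E]
    {W : Set E} (hW : Convex ℝ W) {v p u : E} (hp : p ∈ W)
    (hproj : ∀ y ∈ W, ‖v - p‖ ≤ ‖v - y‖) (hu : u ∈ W) : ‖u - p‖ ≤ ‖u - v‖ := by
  have : Nonempty W := ⟨⟨p, hp⟩⟩
  have hmin : ‖v - p‖ = ⨅ y : W, ‖v - y‖ :=
    le_antisymm (le_ciInf fun y => hproj y y.2)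
      (ciInf_le ⟨0, by rintro _ ⟨y, rfl⟩; exact norm_nonneg _⟩ (⟨p, hp⟩ : W))
  have hinner := (norm_eq_iInf_iff_real_inner_le_zero hW hp).1 hmin u hu
  have hexp := norm_sub_sq_real (u - p) (v - p)
  rw [sub_sub_sub_cancel_right, real_inner_comm] at hexp
  exact (sq_le_sq₀ (norm_nonneg _) (norm_nonneg _)).1 (by nlinarith [sq_nonneg ‖v - p‖])

/-- Strong monotonicity of an increasing function with a lower Lipschitz bound. -/
lemma mul_sq_le_of_monotone {f : ℝ → ℝ} (hf : Monotone f) {c a b : ℝ}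
    (h : c * |a - b| ≤ |f a - f b|) : c * (a - b) ^ 2 ≤ (f a - f b) * (a - b) := by
  have hnonneg : 0 ≤ (f a - f b) * (a - b) := by
    rcases le_total a b with hab | hab
    · exact mul_nonneg_of_nonpos_of_nonpos (sub_nonpos.2 (hf hab)) (sub_nonpos.2 hab)
    · exact mul_nonneg (sub_nonneg.2 (hf hab)) (sub_nonneg.2 hab)
  calc c * (a - b) ^ 2 = c * |a - b| * |a - b| := by rw [mul_assoc, ← sq, sq_abs]
    _ ≤ |f a - f b| * |a - b| := by gcongr
    _ = (f a - f b) * (a - b) := by rw [← abs_mul, abs_of_nonneg hnonneg]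

/-- Pointwise bound on an unprojected TD step; `ξ = ⟪x s, wstar - w⟫` and
`η = ⟪x s', wstar - w⟫`. -/
lemma norm_sub_tdSample_step_sq_le {S : Type*} {d : ℕ} (x : S → EuclideanSpace ℝ (Fin d))
    (r : S → S → ℝ) {γ L : ℝ} {f : ℝ → ℝ} (hx : ∀ s, ‖x s‖ ≤ 1)
    (hγ0 : 0 ≤ γ) (hγ1 : γ < 1) (hL : 1 ≤ L) (hf : Monotone f)
    (hfLip : ∀ a b : ℝ, (1 / L) * |a - b| ≤ |f a - f b| ∧ |f a - f b| ≤ L * |a - b|)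
    (wstar w : EuclideanSpace ℝ (Fin d)) {α : ℝ} (hα0 : 0 ≤ α) (s s' : S) :
    ‖wstar - (w + α • tdSample x r γ f w s s')‖ ^ 2 ≤
      ‖wstar - w‖ ^ 2
        - 2 * α * ((1 / L - γ * L / 2) * ⟪x s, wstar - w⟫ ^ 2
            - γ * L / 2 * ⟪x s', wstar - w⟫ ^ 2)
        - 2 * α * ⟪wstar - w, tdSample x r γ f wstar s s'⟫
        + 2 * α ^ 2 * ‖tdSample x r γ f wstar s s'‖ ^ 2
        + 4 * α ^ 2 * L ^ 2 * (⟪x s, wstar - w⟫ ^ 2 + ⟪x s', wstar - w⟫ ^ 2) := by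
  set g := tdSample x r γ f w s s' with hg
  set gs := tdSample x r γ f wstar s s' with hgs
  set ξ := ⟪x s, wstar - w⟫ with hξ
  set η := ⟪x s', wstar - w⟫ with hη
  set A := f (r s s' + γ * ⟪x s', wstar⟫) - f (r s s' + γ * ⟪x s', w⟫) with hA
  set B := f ⟪x s, wstar⟫ - f ⟪x s, w⟫ with hB
  have hL0 : 0 ≤ L := by linarith
  have hξ' : ⟪x s, wstar⟫ - ⟪x s, w⟫ = ξ := by rw [hξ, inner_sub_right]
  have hη' : ⟪x s', wstar⟫ - ⟪x s', w⟫ = η := by rw [hη, inner_sub_right]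
  have hdiff : g - gs = (B - A) • x s := by
    rw [hg, hgs, tdSample, tdSample, ← sub_smul, hA, hB]
    congr 1
    ring
  have hBξ : 1 / L * ξ ^ 2 ≤ B * ξ := by
    have h := mul_sq_le_of_monotone hf (hfLip ⟪x s, wstar⟫ ⟪x s, w⟫).1
    rwa [hξ'] at h
  have hBabs : |B| ≤ L * |ξ| := by
    have h := (hfLip ⟪x s, wstar⟫ ⟪x s, w⟫).2
    rwa [hξ'] at h
  have hAabs : |A| ≤ L * (γ * |η|) := by
    have h := (hfLip (r s s' + γ * ⟪x s', wstar⟫) (r s s' + γ * ⟪x s', w⟫)).2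
    rwa [add_sub_add_left_eq_sub, ← mul_sub, hη', abs_mul, abs_of_nonneg hγ0] at h
  have hAξ : A * ξ ≤ γ * L / 2 * (ξ ^ 2 + η ^ 2) :=
    calc A * ξ ≤ |A| * |ξ| := by rw [← abs_mul]; exact le_abs_self _
      _ ≤ L * (γ * |η|) * |ξ| := by gcongr
      _ = γ * L / 2 * (2 * |ξ| * |η|) := by ring
      _ ≤ γ * L / 2 * (|ξ| ^ 2 + |η| ^ 2) := by
        gcongr
        exact two_mul_le_add_sq _ _
      _ = γ * L / 2 * (ξ ^ 2 + η ^ 2) := by rw [sq_abs, sq_abs]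
  have hB2 : B ^ 2 ≤ L ^ 2 * ξ ^ 2 := by
    rw [← mul_pow]
    exact sq_le_sq.2 (by rwa [abs_mul, abs_of_nonneg hL0])
  have hA2 : A ^ 2 ≤ L ^ 2 * η ^ 2 := by
    rw [← mul_pow]
    refine sq_le_sq.2 (hAabs.trans ?_)
    rw [abs_mul, abs_of_nonneg hL0]
    gcongr
    exact mul_le_of_le_one_left (abs_nonneg _) hγ1.le
  have hinner : ⟪wstar - w, g⟫ = (B - A) * ξ + ⟪wstar - w, gs⟫ := by
    rw [← sub_eq_iff_eq_add, ← inner_sub_right, hdiff, real_inner_smul_right, real_inner_comm]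
  have hnorm_diff : ‖g - gs‖ ^ 2 ≤ 2 * L ^ 2 * (ξ ^ 2 + η ^ 2) :=
    calc ‖g - gs‖ ^ 2 = (B - A) ^ 2 * ‖x s‖ ^ 2 := by
          rw [hdiff, norm_smul, mul_pow, Real.norm_eq_abs, sq_abs]
      _ ≤ (B - A) ^ 2 :=
        mul_le_of_le_one_right (sq_nonneg _) (pow_le_one₀ (norm_nonneg _) (hx s))
      _ ≤ 2 * L ^ 2 * (ξ ^ 2 + η ^ 2) := by nlinarith [sq_nonneg (B + A)]
  have hnorm : ‖g‖ ^ 2 ≤ 2 * ‖gs‖ ^ 2 + 4 * L ^ 2 * (ξ ^ 2 + η ^ 2) := by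
    have htri : ‖g‖ ≤ ‖gs‖ + ‖g - gs‖ := by simpa using norm_add_le gs (g - gs)
    nlinarith [norm_nonneg g, sq_nonneg (‖gs‖ - ‖g - gs‖),
      pow_le_pow_left₀ (norm_nonneg g) htri 2]
  have hexp : ‖wstar - (w + α • g)‖ ^ 2 =
      ‖wstar - w‖ ^ 2 - 2 * α * ⟪wstar - w, g⟫ + α ^ 2 * ‖g‖ ^ 2 := by
    rw [← sub_sub, norm_sub_sq_real, real_inner_smul_right, norm_smul, mul_pow, Real.norm_eq_abs,
      sq_abs]
    ring
  rw [hexp, hinner]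
  have hdrift := mul_le_mul_of_nonneg_left
    (show (1 / L - γ * L / 2) * ξ ^ 2 - γ * L / 2 * η ^ 2 ≤ (B - A) * ξ by linarith) hα0
  have hvar := mul_le_mul_of_nonneg_left hnorm (sq_nonneg α)
  linarith

/-- expected one-step progress of the projected sample-based TD update
toward the optimal point `w*`:
`Σ_{s,s′} D(s)P(s,s′)‖w* − p(s,s′)‖² ≤ ‖w* − w‖² − α(1/L − γL)Σ_s D(s)⟨x(s), w* − w⟩² + 2α²σ²`. -/
theorem td_sample_update_progress {S : Type*} [Fintype S] [Nonempty S] {d : ℕ}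
    (D : S → ℝ) (P : S → S → ℝ) (x : S → EuclideanSpace ℝ (Fin d))
    (r : S → S → ℝ) (γ L : ℝ) (f : ℝ → ℝ)
    (hD : ∀ s, 0 ≤ D s) (hD1 : ∑ s, D s = 1)
    (hP : ∀ s s', 0 ≤ P s s') (hP1 : ∀ s, ∑ s', P s s' = 1)
    (hstat : ∀ s', ∑ s, D s * P s s' = D s')
    (hx : ∀ s, ‖x s‖ ≤ 1)
    (hγ0 : 0 ≤ γ) (hγ1 : γ < 1) (hL : 1 ≤ L)
    (hf : StrictMono f)
    (hfLip : ∀ a b : ℝ, (1 / L) * |a - b| ≤ |f a - f b| ∧ |f a - f b| ≤ L * |a - b|)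
    (W : Set (EuclideanSpace ℝ (Fin d)))
    (hWne : W.Nonempty) (hWcpt : IsCompact W) (hWcvx : Convex ℝ W)
    (hγL : γ * L ^ 2 < 1)
    (wstar : EuclideanSpace ℝ (Fin d)) (hwstar : wstar ∈ W)
    (hopt : ∀ u ∈ W, ⟪wstar - u, tdExpected D P x r γ f wstar⟫ ≥ 0)
    (w : EuclideanSpace ℝ (Fin d)) (hw : w ∈ W)
    (α : ℝ) (hα0 : 0 < α) (hα : α ≤ (1 - γ * L ^ 2) / (8 * L ^ 3))
    (p : S → S → EuclideanSpace ℝ (Fin d)) (hpW : ∀ s s', p s s' ∈ W)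
    (hproj : ∀ s s', ∀ u ∈ W,
      ‖w + α • tdSample x r γ f w s s' - p s s'‖ ≤
        ‖w + α • tdSample x r γ f w s s' - u‖) :
    ∑ s, ∑ s', D s * P s s' * ‖wstar - p s s'‖ ^ 2 ≤
      ‖wstar - w‖ ^ 2 - α * (1 / L - γ * L) * (∑ s, D s * ⟪x s, wstar - w⟫ ^ 2) +
        2 * α ^ 2 * (∑ s, ∑ s', D s * P s s' * ‖tdSample x r γ f wstar s s'‖ ^ 2) := by
  set e := wstar - w with he
  set V := ∑ s, D s * ⟪x s, e⟫ ^ 2 with hV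
  set σ2 := ∑ s, ∑ s', D s * P s s' * ‖tdSample x r γ f wstar s s'‖ ^ 2 with hσ2
  have hL0 : 0 < L := by linarith
  have hfst : ∀ h : S → ℝ, ∑ s, ∑ s', D s * P s s' * h s = ∑ s, D s * h s := fun h =>
    sum_congr rfl fun s _ => by rw [← sum_mul, ← mul_sum, hP1, mul_one]
  have hsnd : ∀ h : S → ℝ, ∑ s, ∑ s', D s * P s s' * h s' = ∑ s, D s * h s := fun h => by
    rw [sum_comm]
    exact sum_congr rfl fun s _ => by rw [← sum_mul, hstat]
  have hconst : ∑ s, ∑ s', D s * P s s' * ‖e‖ ^ 2 = ‖e‖ ^ 2 := by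
    rw [hfst fun _ => ‖e‖ ^ 2, ← sum_mul, hD1, one_mul]
  have hinner : ∑ s, ∑ s', D s * P s s' * ⟪e, tdSample x r γ f wstar s s'⟫ =
      ⟪e, tdExpected D P x r γ f wstar⟫ := by
    simp only [tdExpected, inner_sum, real_inner_smul_right]
  have hV0 : 0 ≤ V := sum_nonneg fun s _ => mul_nonneg (hD s) (sq_nonneg _)
  have hstep : 8 * α * L ^ 2 ≤ 1 / L - γ * L := by
    rw [le_div_iff₀ (by positivity)] at hα
    rw [show 1 / L - γ * L = (1 - γ * L ^ 2) / L by field_simp, le_div_iff₀ hL0]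
    linarith
  have hmean : ∑ s, ∑ s', D s * P s s' * ‖wstar - p s s'‖ ^ 2 ≤
      ‖e‖ ^ 2 - 2 * α * (1 / L - γ * L) * V - 2 * α * ⟪e, tdExpected D P x r γ f wstar⟫
        + 2 * α ^ 2 * σ2 + 8 * α ^ 2 * L ^ 2 * V := by
    set a := -2 * α * (1 / L - γ * L / 2) + 4 * α ^ 2 * L ^ 2 with ha
    set b := α * γ * L + 4 * α ^ 2 * L ^ 2 with hb
    calc ∑ s, ∑ s', D s * P s s' * ‖wstar - p s s'‖ ^ 2
        ≤ ∑ s, ∑ s', (D s * P s s' * ‖e‖ ^ 2 + a * (D s * P s s' * ⟪x s, e⟫ ^ 2)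
            + b * (D s * P s s' * ⟪x s', e⟫ ^ 2)
            + -2 * α * (D s * P s s' * ⟪e, tdSample x r γ f wstar s s'⟫)
            + 2 * α ^ 2 * (D s * P s s' * ‖tdSample x r γ f wstar s s'‖ ^ 2)) := by
          refine sum_le_sum fun s _ => sum_le_sum fun s' _ => ?_
          have hproj_le := pow_le_pow_left₀ (norm_nonneg _)
            (norm_sub_le_of_metric_projection hWcvx (hpW s s') (hproj s s') hwstar) 2
          have hpoint := mul_le_mul_of_nonneg_left
            (hproj_le.trans (norm_sub_tdSample_step_sq_le x r hx hγ0 hγ1 hL hf.monotone hfLip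
              wstar w hα0.le s s')) (mul_nonneg (hD s) (hP s s'))
          refine hpoint.trans_eq ?_
          rw [ha, hb]
          ring
      _ = ‖e‖ ^ 2 + a * V + b * V + -2 * α * ⟪e, tdExpected D P x r γ f wstar⟫
            + 2 * α ^ 2 * σ2 := by
          simp only [sum_add_distrib, ← mul_sum]
          rw [hconst, hinner, hfst fun s => ⟪x s, e⟫ ^ 2, hsnd fun s => ⟪x s, e⟫ ^ 2]
      _ = _ := by rw [ha, hb]; ring
  have hoptw := mul_nonneg hα0.le (hopt w hw)
  have hstepV := mul_le_mul_of_nonneg_left (mul_le_mul_of_nonneg_right hstep hV0) hα0.le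
  linarith
end
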